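/- arXiv:1906.07069 — 3 statements merged into one kernel-verified Lean document; each statement's English description precedes it below -/
import Mathlib

section
/- Let R₁, …, R_ℓ ⊆ ℕ × ℕ be strictly monotone relations. Then the relational composition R₁R₂⋯R_ℓ equals the intersection of the composition of the weak forward relations ↓→R₁ ↓→R₂ ⋯ ↓→R_ℓ with the composition of the weak backward relations ↓←R₁ ↓←R₂ ⋯ ↓←R_ℓ. That is, a pair (m,n) lies in R₁⋯R_ℓ if and only if it lies in both ↓→R₁⋯↓→R_ℓ and ↓←R₁⋯↓←R_ℓ. -/
/-- The weak forward relation: `(m,n)` is related if some `n' ≥ n` has `(m,n') ∈ R`. -/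
def WeakFwd (R : ℕ → ℕ → Prop) (m n : ℕ) : Prop := ∃ n' ≥ n, R m n'

/-- The weak backward relation: `(m,n)` is related if some `m' ≥ m` has `(m',n) ∈ R`. -/
def WeakBwd (R : ℕ → ℕ → Prop) (m n : ℕ) : Prop := ∃ m' ≥ m, R m' n

/-- `R` is strictly monotone: for `(m,n), (m',n') ∈ R`, `m < m'` iff `n < n'`. -/
def StrictlyMonotoneRel (R : ℕ → ℕ → Prop) : Prop :=
  ∀ m n m' n', R m n → R m' n' → (m < m' ↔ n < n')

/-- Composition of a finite sequence of relations. -/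
def CompList : List (ℕ → ℕ → Prop) → ℕ → ℕ → Prop
  | [] => fun m n => m = n
  | R :: Rs => fun m n => ∃ k, R m k ∧ CompList Rs k n

/-!
Follow a forward witness chain and a backward witness chain from `m`. Monotonicity keeps each point
of the forward chain below the corresponding point of the backward chain. Both chains end at `n`,
and running back from there, equality of two successors forces equality of the points themselves
and makes both weakened steps exact. So the two chains coincide and witness the unweakened
composition.
-/

section

variable {α : Type*}

/-- A relation any two of whose pairs are ordered alike in both coordinates. On a linear order this
is strict monotonicity; it is formulated with `≤` so as to suit partial orders as well. -/
def OrderEmbeddingRel [LE α] (R : α → α → Prop) : Prop :=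
  ∀ ⦃m n m' n'⦄, R m n → R m' n' → (m ≤ m' ↔ n ≤ n')

/-- Composition of a finite sequence of relations on an arbitrary type, extending `CompList`
beyond `ℕ`. The empty composition is equality. -/
def listComp (Rs : List (α → α → Prop)) : α → α → Prop :=
  Rs.foldr Relation.Comp Eq

theorem listComp_le_listComp_map {f : (α → α → Prop) → α → α → Prop} (hf : ∀ R, R ≤ f R)
    (Rs : List (α → α → Prop)) : listComp Rs ≤ listComp (Rs.map f) := by
  induction Rs with
  | nil => exact le_rfl
  | cons R Rs ih =>
    rintro m n ⟨k, hmk, hkn⟩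
    exact ⟨k, hf R m k hmk, ih k n hkn⟩

theorem rel_le_comp_ge [Preorder α] (R : α → α → Prop) : R ≤ Relation.Comp R (· ≥ ·) :=
  fun _ n h => ⟨n, h, le_rfl⟩

theorem rel_le_le_comp [Preorder α] (R : α → α → Prop) : R ≤ Relation.Comp (· ≤ ·) R :=
  fun m _ h => ⟨m, le_rfl, h⟩

namespace OrderEmbeddingRel

variable {R : α → α → Prop} {a b x z : α}

theorem le_of_comp_ge_of_le_comp [Preorder α] (hR : OrderEmbeddingRel R) (hab : a ≤ b)
    (hax : Relation.Comp R (· ≥ ·) a x) (hbz : Relation.Comp (· ≤ ·) R b z) : x ≤ z := by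
  obtain ⟨y, hay, hxy⟩ := hax
  obtain ⟨w, hbw, hwz⟩ := hbz
  exact hxy.trans ((hR hay hwz).mp (hab.trans hbw))

theorem eq_and_rel_of_comp_ge_of_le_comp [PartialOrder α] (hR : OrderEmbeddingRel R) (hab : a ≤ b)
    (hax : Relation.Comp R (· ≥ ·) a x) (hbx : Relation.Comp (· ≤ ·) R b x) : a = b ∧ R a x := by
  obtain ⟨y, hay, hxy⟩ := hax
  obtain ⟨w, hbw, hwx⟩ := hbx
  have hyx : y ≤ x := (hR hay hwx).mp (hab.trans hbw)
  have hwa : w ≤ a := (hR hwx hay).mpr hxy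
  exact ⟨hab.antisymm (hbw.trans hwa), hyx.antisymm hxy ▸ hay⟩

end OrderEmbeddingRel

-- The start points may differ because weakened steps separate the two chains.
theorem eq_and_listComp_of_weak [PartialOrder α] {Rs : List (α → α → Prop)}
    (hRs : ∀ R ∈ Rs, OrderEmbeddingRel R) {a b n : α} (hab : a ≤ b)
    (hfwd : listComp (Rs.map fun R => Relation.Comp R (· ≥ ·)) a n)
    (hbwd : listComp (Rs.map fun R => Relation.Comp (· ≤ ·) R) b n) :
    a = b ∧ listComp Rs a n := by
  induction Rs generalizing a b with
  | nil => exact ⟨hfwd.trans hbwd.symm, hfwd⟩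
  | cons R Rs ih =>
    obtain ⟨hR, hRs⟩ := List.forall_mem_cons.mp hRs
    obtain ⟨x, hax, hxn⟩ := hfwd
    obtain ⟨z, hbz, hzn⟩ := hbwd
    obtain ⟨rfl, hxn'⟩ := ih hRs (hR.le_of_comp_ge_of_le_comp hab hax hbz) hxn hzn
    obtain ⟨hab', hax'⟩ := hR.eq_and_rel_of_comp_ge_of_le_comp hab hax hbz
    exact ⟨hab', x, hax', hxn'⟩

theorem comp_eq_weakFwd_inter_weakBwd_general [PartialOrder α] (Rs : List (α → α → Prop))
    (hRs : ∀ R ∈ Rs, OrderEmbeddingRel R) (m n : α) :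
    listComp Rs m n ↔
      listComp (Rs.map fun R => Relation.Comp R (· ≥ ·)) m n ∧
        listComp (Rs.map fun R => Relation.Comp (· ≤ ·) R) m n :=
  ⟨fun h => ⟨listComp_le_listComp_map rel_le_comp_ge Rs m n h,
    listComp_le_listComp_map rel_le_le_comp Rs m n h⟩,
    fun ⟨hfwd, hbwd⟩ => (eq_and_listComp_of_weak hRs le_rfl hfwd hbwd).2⟩

end

theorem StrictlyMonotoneRel.orderEmbeddingRel {R : ℕ → ℕ → Prop} (hR : StrictlyMonotoneRel R) :
    OrderEmbeddingRel R :=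
  fun m n m' n' h h' => le_iff_le_iff_lt_iff_lt.mpr (hR m' n' m n h' h)

theorem weakFwd_eq_comp_ge : WeakFwd = fun R => Relation.Comp R (· ≥ ·) := by
  funext R m n
  exact propext (exists_congr fun _ => and_comm)

theorem weakBwd_eq_le_comp : WeakBwd = fun R => Relation.Comp (· ≤ ·) R :=
  rfl

theorem compList_eq_listComp (Rs : List (ℕ → ℕ → Prop)) : CompList Rs = listComp Rs := by
  induction Rs with
  | nil => rfl
  | cons R Rs ih => exact congrArg (Relation.Comp R) ih

theorem comp_eq_weakFwd_inter_weakBwd (Rs : List (ℕ → ℕ → Prop))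
    (hmono : ∀ R ∈ Rs, StrictlyMonotoneRel R) (m n : ℕ) :
    CompList Rs m n ↔
      CompList (Rs.map WeakFwd) m n ∧ CompList (Rs.map WeakBwd) m n := by
  simpa only [compList_eq_listComp, weakFwd_eq_comp_ge, weakBwd_eq_le_comp] using
    comp_eq_weakFwd_inter_weakBwd_general Rs (fun R hR => (hmono R hR).orderEmbeddingRel) m n
end

section
/- Let R₁, …, R_ℓ ⊆ ℕ × ℕ be strictly monotone relations. If (m,n) ∈ ↓→R₁⋯↓→R_ℓ and (m,n) ∈ ↓←R₁⋯↓←R_ℓ, witnessed by natural numbers p₀, …, p_ℓ with p₀ = m, p_ℓ = n and (p_{i-1}, p_i) ∈ ↓→R_i for all 0 < i ≤ ℓ, and by q₀, …, q_ℓ with q₀ = m, q_ℓ = n and (q_{i-1}, q_i) ∈ ↓←R_i for all 0 < i ≤ ℓ, then in fact (p_{i-1}, p_i) ∈ R_i for every 0 < i ≤ ℓ; in particular (m,n) ∈ R₁⋯R_ℓ. -/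
/-!
Monotonicity of the `R i` carries `p 0 ≤ q 0` forward to `p ≤ q`; monotonicity of their converses
carries the equality at the last index backward to `q ≤ p`. Hence `p = q`, so every pair `(a, b)` of
consecutive terms lies in both weak relations of `R i`, say through `R i a b'` with `b ≤ b'` and
`R i a' b` with `a ≤ a'`. Monotonicity then gives `b' ≤ b`, so `b' = b` and `R i a b`.
-/

/-- Monotonicity of a relation; between partial orders, such relations are the graphs of monotone
partial functions. That `R` reflects the order is expressed as monotonicity of `flip R`. -/
def MonotoneRel {α β : Type*} [LE α] [LE β] (R : α → β → Prop) : Prop :=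
  ∀ ⦃a b a' b'⦄, R a b → R a' b' → a ≤ a' → b ≤ b'

theorem StrictlyMonotoneRel.monotoneRel {R : ℕ → ℕ → Prop} (hR : StrictlyMonotoneRel R) :
    MonotoneRel R :=
  fun a b a' b' h h' => le_imp_le_of_lt_imp_lt (hR a' b' a b h' h).2

theorem StrictlyMonotoneRel.monotoneRel_flip {R : ℕ → ℕ → Prop} (hR : StrictlyMonotoneRel R) :
    MonotoneRel (flip R) :=
  fun b a b' a' h h' => le_imp_le_of_lt_imp_lt (hR a' b' a b h' h).1

namespace MonotoneRel

theorem le_of_weak {α β : Type*} [Preorder α] [Preorder β] {R : α → β → Prop}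
    (hR : MonotoneRel R) {a c : α} {b d : β} (hab : ∃ b' ≥ b, R a b') (hcd : ∃ c' ≥ c, R c' d)
    (hac : a ≤ c) : b ≤ d := by
  obtain ⟨b', hb, hab'⟩ := hab
  obtain ⟨c', hc, hcd'⟩ := hcd
  exact hb.trans (hR hab' hcd' (hac.trans hc))

theorem rel_of_weak {α β : Type*} [Preorder α] [PartialOrder β] {R : α → β → Prop}
    (hR : MonotoneRel R) {a : α} {b : β} (hfwd : ∃ b' ≥ b, R a b') (hbwd : ∃ a' ≥ a, R a' b) :
    R a b := by
  obtain ⟨b', hb, hab'⟩ := hfwd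
  have hb' : b' ≤ b := hR.le_of_weak ⟨b', le_rfl, hab'⟩ hbwd le_rfl
  exact le_antisymm hb' hb ▸ hab'

end MonotoneRel

section Chain

variable {ℓ : ℕ} {α : Fin (ℓ + 1) → Type*} {R : ∀ i : Fin ℓ, α i.castSucc → α i.succ → Prop}
  {p q : ∀ i, α i}

theorem le_of_weak_of_zero_le [∀ i, Preorder (α i)] (hR : ∀ i, MonotoneRel (R i))
    (hp : ∀ i, ∃ b ≥ p i.succ, R i (p i.castSucc) b)
    (hq : ∀ i, ∃ a ≥ q i.castSucc, R i a (q i.succ)) (h0 : p 0 ≤ q 0) : p ≤ q :=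
  Fin.induction h0 fun i => (hR i).le_of_weak (hp i) (hq i)

theorem ge_of_weak_of_last_ge [∀ i, Preorder (α i)] (hR : ∀ i, MonotoneRel (flip (R i)))
    (hp : ∀ i, ∃ b ≥ p i.succ, R i (p i.castSucc) b)
    (hq : ∀ i, ∃ a ≥ q i.castSucc, R i a (q i.succ))
    (hlast : q (Fin.last ℓ) ≤ p (Fin.last ℓ)) : q ≤ p :=
  Fin.reverseInduction hlast fun i => (hR i).le_of_weak (hq i) (hp i)

theorem weak_witnesses_are_exact_general [∀ i, PartialOrder (α i)]
    (hR : ∀ i, MonotoneRel (R i)) (hR' : ∀ i, MonotoneRel (flip (R i)))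
    (hp : ∀ i, ∃ b ≥ p i.succ, R i (p i.castSucc) b)
    (hq : ∀ i, ∃ a ≥ q i.castSucc, R i a (q i.succ))
    (h0 : p 0 ≤ q 0) (hlast : q (Fin.last ℓ) ≤ p (Fin.last ℓ)) :
    p = q ∧ ∀ i, R i (p i.castSucc) (p i.succ) := by
  obtain rfl : p = q :=
    le_antisymm (le_of_weak_of_zero_le hR hp hq h0) (ge_of_weak_of_last_ge hR' hp hq hlast)
  exact ⟨rfl, fun i => (hR i).rel_of_weak (hp i) (hq i)⟩

end Chain

theorem compList_ofFn {ℓ : ℕ} {R : Fin ℓ → ℕ → ℕ → Prop} {p : Fin (ℓ + 1) → ℕ}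
    (h : ∀ i, R i (p i.castSucc) (p i.succ)) :
    CompList (List.ofFn R) (p 0) (p (Fin.last ℓ)) := by
  induction ℓ with
  | zero => rfl
  | succ k ih =>
    rw [List.ofFn_succ]
    exact ⟨p 1, h 0, ih (p := fun i => p i.succ) fun i => h i.succ⟩

theorem weak_witnesses_are_exact (ℓ : ℕ) (R : Fin ℓ → ℕ → ℕ → Prop)
    (hmono : ∀ i, StrictlyMonotoneRel (R i))
    (m n : ℕ) (p q : Fin (ℓ + 1) → ℕ)
    (hp0 : p 0 = m) (hpl : p (Fin.last ℓ) = n)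
    (hp : ∀ i : Fin ℓ, WeakFwd (R i) (p i.castSucc) (p i.succ))
    (hq0 : q 0 = m) (hql : q (Fin.last ℓ) = n)
    (hq : ∀ i : Fin ℓ, WeakBwd (R i) (q i.castSucc) (q i.succ)) :
    (∀ i : Fin ℓ, R i (p i.castSucc) (p i.succ)) ∧
      CompList (List.ofFn R) m n := by
  subst hp0 hpl
  have hR := (weak_witnesses_are_exact_general (α := fun _ => ℕ)
    (fun i => (hmono i).monotoneRel) (fun i => (hmono i).monotoneRel_flip)
    hp hq hq0.ge hql.le).2
  exact ⟨hR, compList_ofFn hR⟩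
end

section
/- Let Δ := {m₂, m₃, d₂, d₃, t₂, t₃} and for each letter x ∈ Δ let R_x ⊆ ℕ × ℕ be the corresponding relation: R_{m_f} := {(n, f·n) | n ∈ ℕ}, R_{d_f} := {(f·n, n) | n ∈ ℕ}, and R_{t_f} := {(n,n) | n ≢ 0 (mod f)} for f ∈ {2,3}. Then for every word x₁⋯x_ℓ over Δ, the pair (1,1) belongs to the composition R_{x₁}R_{x₂}⋯R_{x_ℓ} if and only if (1,1) belongs to both ↓→R_{x₁}⋯↓→R_{x_ℓ} and ↓←R_{x₁}⋯↓←R_{x_ℓ}. -/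
/-- The alphabet Δ = {m₂, m₃, d₂, d₃, t₂, t₃}. -/
inductive Delta : Type
  | m2 | m3 | d2 | d3 | t2 | t3

/-- The relation associated with each letter of Δ. -/
def RelOf : Delta → ℕ → ℕ → Prop
  | .m2 => fun m n => n = 2 * m
  | .m3 => fun m n => n = 3 * m
  | .d2 => fun m n => m = 2 * n
  | .d3 => fun m n => m = 3 * n
  | .t2 => fun m n => m = n ∧ n % 2 ≠ 0
  | .t3 => fun m n => m = n ∧ n % 3 ≠ 0

/-!
Let `m ≤ m'`, and let a weak forward run from `m` and a weak backward run from `m'` end at the same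
point. Strictly monotone steps preserve the order, the forward run may only drop after a step and
the backward run may only rise before one, so the forward run stays below the backward run.
Going back along the word from the common endpoint, the two runs must agree at every position,
which excludes every proper drop and rise: both runs are exact.
-/

theorem WeakFwd.of_rel {R : ℕ → ℕ → Prop} {m n : ℕ} (h : R m n) : WeakFwd R m n :=
  ⟨n, le_rfl, h⟩

theorem WeakBwd.of_rel {R : ℕ → ℕ → Prop} {m n : ℕ} (h : R m n) : WeakBwd R m n :=
  ⟨m, le_rfl, h⟩

theorem CompList.map_of_imp {f : (ℕ → ℕ → Prop) → ℕ → ℕ → Prop}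
    (hf : ∀ {R : ℕ → ℕ → Prop} {m n : ℕ}, R m n → f R m n)
    {Rs : List (ℕ → ℕ → Prop)} {m n : ℕ} (h : CompList Rs m n) : CompList (Rs.map f) m n := by
  induction Rs generalizing m with
  | nil => exact h
  | cons R Rs ih =>
    obtain ⟨k, hmk, hkn⟩ := h
    exact ⟨k, hf hmk, ih hkn⟩

namespace StrictlyMonotoneRel

variable {R : ℕ → ℕ → Prop} {m n m' n' : ℕ}

theorem le_iff_le (hR : StrictlyMonotoneRel R) (h : R m n) (h' : R m' n') : m ≤ m' ↔ n ≤ n' :=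
  le_iff_le_iff_lt_iff_lt.mpr (hR m' n' m n h' h)

theorem le_of_weakFwd_of_weakBwd (hR : StrictlyMonotoneRel R) (hle : m ≤ m')
    (hF : WeakFwd R m n) (hB : WeakBwd R m' n') : n ≤ n' := by
  obtain ⟨p, hnp, hmp⟩ := hF
  obtain ⟨q, hmq, hqn⟩ := hB
  exact hnp.trans ((hR.le_iff_le hmp hqn).mp (hle.trans hmq))

theorem eq_and_rel_of_weakFwd_of_weakBwd (hR : StrictlyMonotoneRel R) (hle : m ≤ m')
    (hF : WeakFwd R m n) (hB : WeakBwd R m' n) : m = m' ∧ R m n := by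
  obtain ⟨p, hnp, hmp⟩ := hF
  obtain ⟨q, hmq, hqn⟩ := hB
  have hqm : q ≤ m := (hR.le_iff_le hqn hmp).mpr hnp
  obtain rfl : m = m' := hle.antisymm (hmq.trans hqm)
  obtain rfl : q = m := hqm.antisymm hmq
  exact ⟨rfl, hqn⟩

end StrictlyMonotoneRel

theorem CompList.eq_and_comp_of_weakFwd_of_weakBwd {Rs : List (ℕ → ℕ → Prop)}
    (hRs : ∀ R ∈ Rs, StrictlyMonotoneRel R) {m m' n : ℕ} (hle : m ≤ m')
    (hF : CompList (Rs.map WeakFwd) m n) (hB : CompList (Rs.map WeakBwd) m' n) :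
    m = m' ∧ CompList Rs m n := by
  induction Rs generalizing m m' with
  | nil => exact ⟨hF.trans hB.symm, hF⟩
  | cons R Rs ih =>
    obtain ⟨hR, hRs⟩ := List.forall_mem_cons.mp hRs
    obtain ⟨k, hmk, hkn⟩ := hF
    obtain ⟨k', hmk', hkn'⟩ := hB
    have hkk' : k ≤ k' := hR.le_of_weakFwd_of_weakBwd hle hmk hmk'
    obtain ⟨rfl, hcomp⟩ := ih hRs hkk' hkn hkn'
    obtain ⟨hmm', hrel⟩ := hR.eq_and_rel_of_weakFwd_of_weakBwd hle hmk hmk'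
    exact ⟨hmm', k, hrel, hcomp⟩

theorem one_one_comp_iff_weak_general {Rs : List (ℕ → ℕ → Prop)}
    (hRs : ∀ R ∈ Rs, StrictlyMonotoneRel R) (m n : ℕ) :
    CompList Rs m n ↔ CompList (Rs.map WeakFwd) m n ∧ CompList (Rs.map WeakBwd) m n where
  mp h := ⟨h.map_of_imp WeakFwd.of_rel, h.map_of_imp WeakBwd.of_rel⟩
  mpr h := (CompList.eq_and_comp_of_weakFwd_of_weakBwd hRs le_rfl h.1 h.2).2

theorem strictlyMonotoneRel_relOf (x : Delta) : StrictlyMonotoneRel (RelOf x) := by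
  intro m n m' n' h h'
  cases x <;> simp only [RelOf] at h h' <;> omega

theorem one_one_comp_iff_weak (w : List Delta) :
    CompList (w.map RelOf) 1 1 ↔
      CompList (w.map fun x => WeakFwd (RelOf x)) 1 1 ∧
        CompList (w.map fun x => WeakBwd (RelOf x)) 1 1 := by
  simpa only [List.map_map, Function.comp_def] using
    one_one_comp_iff_weak_general
      (List.forall_mem_map.mpr fun x _ => strictlyMonotoneRel_relOf x) 1 1
end
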